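/- arXiv:2604.13334 — 4 statements merged into one kernel-verified Lean document; each statement's English description precedes it below -/
import Mathlib

section
/- Fix ε > 0 and P₀ > 0, and let σ be any discrete-time trading strategy. If there exists t < T with w_t ≠ 0 (the strategy takes a nonzero position at some step before T), then the realized profit along the adversarial price path satisfies Π_T < 0 strictly. -/
/-- The adversarial price history against strategy `σ`, stored newest-first:
`advHist ε P₀ σ t = [P t, P (t-1), …, P 0]`.  The strategy `σ` receives the
history in chronological order `(P 0, …, P t)` and returns its position `w t`;
the adversary then moves the price against the position. -/
noncomputable def advHist (ε P₀ : ℝ) (σ : List ℝ → ℝ) : ℕ → List ℝ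
  | 0 => [P₀]
  | t + 1 =>
    let h := advHist ε P₀ σ t
    let w := σ h.reverse
    (if 0 < w then h.headI * Real.exp (-ε)
     else if w < 0 then h.headI * Real.exp ε
     else h.headI) :: h

/-- The adversarial price path: `advPrice ε P₀ σ t = P t`. -/
noncomputable def advPrice (ε P₀ : ℝ) (σ : List ℝ → ℝ) (t : ℕ) : ℝ :=
  (advHist ε P₀ σ t).headI

/-- The position `w t = σ (P 0, …, P t)` taken by the strategy along the
adversarial path. -/
noncomputable def advPos (ε P₀ : ℝ) (σ : List ℝ → ℝ) (t : ℕ) : ℝ :=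
  σ (advHist ε P₀ σ t).reverse

/-- The realized profit `Π_T = ∑_{t<T} w t * (P (t+1) - P t)` along the
adversarial path. -/
noncomputable def advProfit (ε P₀ : ℝ) (σ : List ℝ → ℝ) (T : ℕ) : ℝ :=
  ∑ t ∈ Finset.range T,
    advPos ε P₀ σ t * (advPrice ε P₀ σ (t + 1) - advPrice ε P₀ σ t)

theorem advPrice_succ_aux (ε P₀ : ℝ) (σ : List ℝ → ℝ) (t : ℕ) :
    advPrice ε P₀ σ (t + 1) =
      if 0 < advPos ε P₀ σ t then advPrice ε P₀ σ t * Real.exp (-ε)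
      else if advPos ε P₀ σ t < 0 then advPrice ε P₀ σ t * Real.exp ε
      else advPrice ε P₀ σ t := rfl

theorem advPrice_pos_aux (ε P₀ : ℝ) (hP₀ : 0 < P₀) (σ : List ℝ → ℝ) (t : ℕ) :
    0 < advPrice ε P₀ σ t := by
  induction t with
  | zero => exact hP₀
  | succ t ih =>
    rw [advPrice_succ_aux]
    split_ifs <;> positivity

theorem adv_step_aux (ε P₀ : ℝ) (hε : 0 < ε) (hP₀ : 0 < P₀) (σ : List ℝ → ℝ) (t : ℕ)
    (hw : advPos ε P₀ σ t ≠ 0) :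
    advPos ε P₀ σ t * (advPrice ε P₀ σ (t + 1) - advPrice ε P₀ σ t) < 0 := by
  have hp := advPrice_pos_aux ε P₀ hP₀ σ t
  have h1 : Real.exp (-ε) < 1 := Real.exp_lt_one_iff.mpr (by linarith)
  have h2 : 1 < Real.exp ε := Real.one_lt_exp_iff.mpr hε
  rw [advPrice_succ_aux]
  rcases lt_or_gt_of_ne hw with hn | hn
  · rw [if_neg (not_lt.mpr hn.le), if_pos hn]
    exact mul_neg_of_neg_of_pos hn (by nlinarith)
  · rw [if_pos hn]
    exact mul_neg_of_pos_of_neg hn (by nlinarith)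

/-- If the strategy takes a nonzero position at some step before `T`, then the
realized profit along the adversarial price path is strictly negative. -/
theorem adversary_strict_loss (ε P₀ : ℝ) (hε : 0 < ε) (hP₀ : 0 < P₀)
    (σ : List ℝ → ℝ) (T : ℕ) (h : ∃ t < T, advPos ε P₀ σ t ≠ 0) :
    advProfit ε P₀ σ T < 0 := by
  obtain ⟨t, ht, hw⟩ := h
  refine Finset.sum_neg' (fun i _ => ?_)
    ⟨t, Finset.mem_range.mpr ht, adv_step_aux ε P₀ hε hP₀ σ t hw⟩
  by_cases hi : advPos ε P₀ σ i = 0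
  · rw [hi, zero_mul]
  · exact (adv_step_aux ε P₀ hε hP₀ σ i hi).le
end

section
/- Let (Ω, 𝓕) be a measurable space carrying two probability measures ℙ and ℚ that are mutually absolutely continuous (equivalent), a filtration (𝓕_n)_{n∈ℕ}, a real-valued price process P = (P_n) that is a ℚ-martingale, and a predictable bounded strategy w = (w_n). Then for every horizon N it is NOT the case that the gains satisfy G_N > 0 ℙ-almost surely. In particular, there is no strategy whose gains are strictly positive on every ω ∈ Ω. (No universally successful strategy exists in any market admitting an equivalent martingale measure.) -/
open MeasureTheory

/-- **No universally successful strategy exists in any market admitting an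
equivalent martingale measure.**  Let `ℙ` (physical) and `ℚ` (pricing) be
mutually absolutely continuous probability measures on `(Ω, 𝓕)`, let `P` be a
real-valued `ℚ`-martingale with respect to the filtration `ℱ`, and let `w` be
a predictable bounded strategy.  Then for every horizon `N` it is NOT the case
that the gains `G N = ∑_{n<N} w n * (P (n+1) - P n)` are `ℙ`-almost surely
strictly positive; in particular, there is no strategy whose gains are
strictly positive on every `ω ∈ Ω`. -/
theorem no_universal_strategy_equivalent_measure {Ω : Type*}
    {m0 : MeasurableSpace Ω} (ℙ 𝒬 : Measure Ω)
    [IsProbabilityMeasure ℙ] [IsProbabilityMeasure 𝒬]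
    (hPQ : ℙ ≪ 𝒬) (hQP : 𝒬 ≪ ℙ)
    (ℱ : Filtration ℕ m0)
    (P : ℕ → Ω → ℝ) (hP : Martingale P ℱ 𝒬)
    (w : ℕ → Ω → ℝ) (hw : Adapted ℱ w)
    (C : ℝ) (hwbdd : ∀ n ω, |w n ω| ≤ C) (N : ℕ) :
    ¬ (∀ᵐ ω ∂ℙ, 0 < ∑ n ∈ Finset.range N, w n ω * (P (n + 1) ω - P n ω)) ∧
    ¬ (∀ ω, 0 < ∑ n ∈ Finset.range N, w n ω * (P (n + 1) ω - P n ω)) := by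
  have hD : ∀ n, Integrable (P (n + 1) - P n) 𝒬 := fun n =>
    (hP.integrable (n + 1)).sub (hP.integrable n)
  have hI : ∀ n, Integrable (w n * (P (n + 1) - P n)) 𝒬 := fun n =>
    (hD n).bdd_mul (c := C) ((hw n).mono (ℱ.le n) le_rfl).aestronglyMeasurable
      (Filter.Eventually.of_forall fun ω => by simpa using hwbdd n ω)
  have h0 : ∀ n, ∫ ω, (w n * (P (n + 1) - P n)) ω ∂𝒬 = 0 := by
    intro n
    have h1 := condExp_mul_of_stronglyMeasurable_left (hw n).stronglyMeasurable (hI n) (hD n)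
    have h2 : 𝒬[P (n + 1) - P n | ℱ n] =ᵐ[𝒬] 0 := by
      have h3 := condExp_sub (hP.integrable (n + 1)) (hP.integrable n) (ℱ n)
      filter_upwards [h3, hP.condExp_ae_eq (Nat.le_succ n), hP.condExp_ae_eq (le_refl n)]
        with ω a b c
      rw [a, Pi.sub_apply, c]
      simp [b]
    rw [← integral_condExp (ℱ.le n)]
    apply integral_eq_zero_of_ae
    filter_upwards [h1, h2] with ω a b
    rw [a, Pi.mul_apply, b]
    simp
  have key : ¬ (∀ᵐ ω ∂ℙ, 0 < ∑ n ∈ Finset.range N, w n ω * (P (n + 1) ω - P n ω)) := by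
    intro h
    have hq : ∀ᵐ ω ∂𝒬, 0 < ∑ n ∈ Finset.range N, w n ω * (P (n + 1) ω - P n ω) := hQP.ae_le h
    have hint : Integrable (fun ω => ∑ n ∈ Finset.range N, w n ω * (P (n + 1) ω - P n ω)) 𝒬 :=
      integrable_finsetSum _ fun n _ => hI n
    have hz : ∫ ω, ∑ n ∈ Finset.range N, w n ω * (P (n + 1) ω - P n ω) ∂𝒬 = 0 := by
      refine (integral_finsetSum _ fun n _ => hI n).trans ?_
      exact Finset.sum_eq_zero fun n _ => h0 n
    have hae := (integral_eq_zero_iff_of_nonneg_ae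
      (hq.mono fun ω hω => le_of_lt hω) hint).1 hz
    have hf : ∀ᵐ ω ∂𝒬, False := by
      filter_upwards [hq, hae] with ω a b
      rw [b] at a
      exact lt_irrefl _ a
    exact hf.exists.elim fun _ h => h
  exact ⟨key, fun h => key (Filter.Eventually.of_forall h)⟩
end

section
/- Let X and Y be finite nonempty sets, let a be any deterministic non-repeating search algorithm over X with observations in Y, and let m ≤ |X|. Then for every fixed value-trace v ∈ Y^m, the number of objective functions f : X → Y for which running a on f for m steps produces exactly the trace v equals |Y|^(|X| − m); in particular this count does not depend on the algorithm a. (Counting form of the No-Free-Lunch theorem.) -/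
/-- A deterministic search rule `a : List (X × Y) → X` is *non-repeating* if,
given any history of distinct queried points paired with observed values such
that unqueried points remain, it outputs a point not previously queried. -/
def NonRepeating {X Y : Type*} [Fintype X] (a : List (X × Y) → X) : Prop :=
  ∀ l : List (X × Y), (l.map Prod.fst).Nodup → l.length < Fintype.card X →
    a l ∉ l.map Prod.fst

/-- Running the algorithm `a` on the objective function `f : X → Y` for `m`
steps: the history of queried points paired with their observed values, in
chronological order. -/
def runAlg {X Y : Type*} (a : List (X × Y) → X) (f : X → Y) : ℕ → List (X × Y)
  | 0 => []
  | m + 1 =>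
    let h := runAlg a f m
    h ++ [(a h, f (a h))]

/-- The value-trace `(f x₁, …, f x_m)` produced by running `a` on `f` for `m`
steps. -/
def valueTrace {X Y : Type*} (a : List (X × Y) → X) (f : X → Y) (m : ℕ) :
    List Y :=
  (runAlg a f m).map Prod.snd

theorem nfl_hist {X Y : Type*} [Fintype X] (a : List (X × Y) → X) (ha : NonRepeating a)
    (v : List Y) : v.length ≤ Fintype.card X →
    ∃ l : List (X × Y), (l.map Prod.fst).Nodup ∧ l.length = v.length ∧
      ∀ f : X → Y, (valueTrace a f v.length = v ↔ runAlg a f v.length = l) ∧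
        (runAlg a f v.length = l ↔ ∀ p ∈ l, f p.1 = p.2) := by
  induction v using List.reverseRecOn with
  | nil => intro _; exact ⟨[], by simp [valueTrace, runAlg]⟩
  | append_singleton v y ih =>
    intro h
    rw [List.length_append, List.length_singleton] at h
    obtain ⟨l, hn, hl, H⟩ := ih (by omega)
    have hnew := ha l hn (by omega)
    refine ⟨l ++ [(a l, y)], ?_, by simp [hl], ?_⟩
    · rw [List.map_append, List.nodup_append]
      refine ⟨hn, by simp, ?_⟩
      intro x hx z hz
      simp only [List.map_cons, List.map_nil, List.mem_singleton] at hz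
      rintro rfl
      exact hnew (hz ▸ hx)
    · intro f
      obtain ⟨H1, H2⟩ := H f
      have e1 : valueTrace a f (v ++ [y]).length = v ++ [y] ↔
          valueTrace a f v.length = v ∧ f (a (runAlg a f v.length)) = y := by
        rw [List.length_append, List.length_singleton]
        simp only [valueTrace, runAlg, List.map_append, List.map_cons, List.map_nil]
        rw [List.append_singleton_inj]
      have e2 : runAlg a f (v ++ [y]).length = l ++ [(a l, y)] ↔
          runAlg a f v.length = l ∧ f (a (runAlg a f v.length)) = y := by
        rw [List.length_append, List.length_singleton]
        simp only [runAlg]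
        rw [List.append_singleton_inj, Prod.mk.injEq]
        constructor
        · rintro ⟨h1, h2, h3⟩; exact ⟨h1, h3⟩
        · rintro ⟨h1, h3⟩; exact ⟨h1, by rw [h1], h3⟩
      refine ⟨by rw [e1, e2, H1], ?_⟩
      rw [e2]
      simp only [List.mem_append, List.mem_singleton, or_imp, forall_and, forall_eq]
      rw [← H2]
      constructor
      · rintro ⟨h1, h2⟩; exact ⟨h1, by rw [h1] at h2; exact h2⟩
      · rintro ⟨h1, h2⟩; exact ⟨h1, by rw [h1]; exact h2⟩

theorem nfl_count {X Y : Type*} [Fintype X] [Fintype Y] [DecidableEq X] [DecidableEq Y]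
    (l : List (X × Y)) (hn : (l.map Prod.fst).Nodup) :
    (Finset.univ.filter fun f : X → Y => ∀ p ∈ l, f p.1 = p.2).card =
      Fintype.card Y ^ (Fintype.card X - l.length) := by
  have e : (Finset.univ.filter fun f : X → Y => ∀ p ∈ l, f p.1 = p.2) =
      Fintype.piFinset (fun x => Finset.univ.filter fun y : Y => ∀ p ∈ l, p.1 = x → y = p.2) := by
    ext f
    simp only [Finset.mem_filter, Finset.mem_univ, true_and, Fintype.mem_piFinset]
    constructor
    · rintro h x p hp rfl; exact h p hp
    · intro h p hp; exact h p.1 p hp rfl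
  have c : ∀ x : X, (Finset.univ.filter fun y : Y => ∀ p ∈ l, p.1 = x → y = p.2).card =
      if x ∈ (l.map Prod.fst).toFinset then 1 else Fintype.card Y := by
    intro x
    split_ifs with hx
    · rw [List.mem_toFinset, List.mem_map] at hx
      obtain ⟨q, hq, rfl⟩ := hx
      rw [Finset.card_eq_one]
      refine ⟨q.2, ?_⟩
      ext y
      simp only [Finset.mem_filter, Finset.mem_univ, true_and, Finset.mem_singleton]
      constructor
      · intro h; exact h q hq rfl
      · rintro rfl p hp hpq
        rw [List.inj_on_of_nodup_map hn hp hq hpq]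
    · rw [Finset.filter_true_of_mem, Finset.card_univ]
      rintro y - p hp rfl
      exact absurd (List.mem_toFinset.2 (List.mem_map_of_mem hp)) hx
  rw [e, Fintype.card_piFinset, Finset.prod_congr rfl (fun x _ => c x), Finset.prod_ite]
  simp only [Finset.prod_const, one_pow, one_mul]
  congr 1
  rw [Finset.filter_not, Finset.filter_mem_eq_inter, Finset.univ_inter,
    ← Finset.compl_eq_univ_sdiff, Finset.card_compl, List.toFinset_card_of_nodup hn,
    List.length_map]

/-- **Counting form of the No-Free-Lunch theorem.**
Let `X` and `Y` be finite nonempty sets, `a` any deterministic non-repeating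
search algorithm over `X` with observations in `Y`, and `m ≤ |X|`.  For every
fixed value-trace `v ∈ Y^m`, the number of objective functions `f : X → Y` on
which running `a` for `m` steps produces exactly the trace `v` equals
`|Y| ^ (|X| - m)`; in particular this count does not depend on `a`. -/
theorem no_free_lunch_counting {X Y : Type*} [Fintype X] [Fintype Y]
    [DecidableEq X] [DecidableEq Y] [Nonempty X] [Nonempty Y]
    (a : List (X × Y) → X) (ha : NonRepeating a)
    (m : ℕ) (hm : m ≤ Fintype.card X) (v : List Y) (hv : v.length = m) :
    (Finset.univ.filter fun f : X → Y => valueTrace a f m = v).card =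
      Fintype.card Y ^ (Fintype.card X - m) := by
  subst hv
  obtain ⟨l, hn, hl, H⟩ := nfl_hist a ha v hm
  rw [← hl, ← nfl_count l hn, hl]
  congr 1
  ext f
  simp only [Finset.mem_filter, Finset.mem_univ, true_and]
  exact (H f).1.trans (H f).2
end

section
/- Let X and Y be finite nonempty sets, let m ≤ |X|, and let Φ : Y^m → ℝ be any performance functional on value-traces. Then for any two deterministic non-repeating search algorithms a₁ and a₂ over X, the total performance summed uniformly over all objective functions is identical: ∑_{f : X → Y} Φ(trace(a₁, f, m)) = ∑_{f : X → Y} Φ(trace(a₂, f, m)). (No-Free-Lunch theorem of Wolpert–Macready: averaged uniformly over all objective functions, no search algorithm outperforms another.) -/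
theorem nfl_len {X Y : Type*} (a : List (X × Y) → X) (f : X → Y) (k : ℕ) :
    (runAlg a f k).length = k := by
  induction k with
  | zero => rfl
  | succ k ih => simp [runAlg, ih]

theorem nfl_nodup {X Y : Type*} [Fintype X] (a : List (X × Y) → X) (ha : NonRepeating a)
    (f : X → Y) (k : ℕ) (hk : k ≤ Fintype.card X) :
    ((runAlg a f k).map Prod.fst).Nodup := by
  induction k with
  | zero => simp [runAlg]
  | succ k ih =>
    have h1 := ih (by omega)
    have h2 := ha _ h1 (by rw [nfl_len]; omega)
    simp only [runAlg, List.map_append, List.map_cons, List.map_nil]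
    rw [← List.concat_eq_append]
    exact h1.concat h2

theorem nfl_mem {X Y : Type*} (a : List (X × Y) → X) (f : X → Y) (k : ℕ) :
    ∀ p ∈ runAlg a f k, f p.1 = p.2 := by
  induction k with
  | zero => simp [runAlg]
  | succ k ih =>
    intro p hp
    simp only [runAlg, List.mem_append, List.mem_singleton] at hp
    rcases hp with hp | rfl
    · exact ih p hp
    · rfl

theorem nfl_take {X Y : Type*} (a : List (X × Y) → X) (f : X → Y) (m n : ℕ) (h : m ≤ n) :
    valueTrace a f m = (valueTrace a f n).take m := by
  induction n, h using Nat.le_induction with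
  | base => rw [List.take_of_length_le]; simp [valueTrace, nfl_len]
  | succ n hn ih =>
    rw [ih]
    simp only [valueTrace, runAlg, List.map_append]
    rw [List.take_append_of_le_length]
    simpa [nfl_len] using hn

theorem nfl_det {X Y : Type*} (a : List (X × Y) → X) (f g : X → Y) (k : ℕ)
    (h : valueTrace a f k = valueTrace a g k) : runAlg a f k = runAlg a g k := by
  induction k with
  | zero => rfl
  | succ k ih =>
    simp only [valueTrace, runAlg, List.map_append, List.map_cons, List.map_nil] at h
    obtain ⟨h1, h2⟩ := List.append_inj h (by simp [nfl_len])
    have h3 := ih h1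
    simp only [List.cons.injEq, and_true] at h2
    simp only [runAlg]
    rw [h2, h3]

theorem nfl_sum {X Y : Type*} [Fintype X] [Fintype Y] [DecidableEq X]
    (m : ℕ) (hm : m ≤ Fintype.card X) (Φ : List Y → ℝ)
    (a : List (X × Y) → X) (ha : NonRepeating a) :
    ∑ f : X → Y, Φ (valueTrace a f m) =
      ∑ v : List.Vector Y (Fintype.card X), Φ (v.toList.take m) := by
  let F : (X → Y) → List.Vector Y (Fintype.card X) :=
    fun f => ⟨valueTrace a f (Fintype.card X), by simp [valueTrace, nfl_len]⟩
  have hF : Function.Bijective F := by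
    rw [Fintype.bijective_iff_injective_and_card]
    refine ⟨?_, by simp⟩
    intro f g hfg
    have h := nfl_det a f g _ (congrArg Subtype.val hfg)
    funext x
    have hn := nfl_nodup a ha f _ le_rfl
    have hx : x ∈ (runAlg a f (Fintype.card X)).map Prod.fst := by
      have hc : ((runAlg a f (Fintype.card X)).map Prod.fst).toFinset = Finset.univ := by
        rw [← Finset.card_eq_iff_eq_univ, List.toFinset_card_of_nodup hn]
        simp [nfl_len]
      rw [← List.mem_toFinset, hc]
      exact Finset.mem_univ x
    obtain ⟨p, hp, rfl⟩ := List.mem_map.1 hx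
    rw [nfl_mem a f _ p hp, nfl_mem a g _ p (h ▸ hp)]
  refine Fintype.sum_bijective F hF _ _ fun f => ?_
  rw [nfl_take a f m _ hm]
  rfl

/-- **No-Free-Lunch theorem (Wolpert–Macready).**
Let `X` and `Y` be finite nonempty sets, `m ≤ |X|`, and `Φ : Y^m → ℝ` any
performance functional on value-traces.  For any two deterministic
non-repeating search algorithms `a₁` and `a₂` over `X`, the total performance
summed uniformly over all objective functions `f : X → Y` is identical:
averaged uniformly over all objectives, no search algorithm outperforms
another. -/
theorem no_free_lunch {X Y : Type*} [Fintype X] [Fintype Y]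
    [DecidableEq X] [DecidableEq Y] [Nonempty X] [Nonempty Y]
    (m : ℕ) (hm : m ≤ Fintype.card X) (Φ : List Y → ℝ)
    (a₁ a₂ : List (X × Y) → X)
    (ha₁ : NonRepeating a₁) (ha₂ : NonRepeating a₂) :
    ∑ f : X → Y, Φ (valueTrace a₁ f m) = ∑ f : X → Y, Φ (valueTrace a₂ f m) := by
  rw [nfl_sum m hm Φ a₁ ha₁, nfl_sum m hm Φ a₂ ha₂]
end
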